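/- arXiv:2201.04264 — 6 statements merged into one kernel-verified Lean document; each statement's English description precedes it below -/
import Mathlib

section
/- Let z* ∈ X. Suppose there exists d* ∈ E such that d* minimizes d ↦ ∇g(z*)·d over the cone T(z*) = {d ∈ E : gᵢ(z*) + ∇gᵢ(z*)·d ≤ 0 for all i = 1,…,s and ∇hⱼ(z*)·d ≤ 0 for all j = 1,…,r}, and that ∇g(z*)·d* ≥ 0. Then (a) g(z*) ≤ g(z) for every z ∈ X, and (b) there exist multipliers u* ∈ ℝ^s with u* ≥ 0 and v* ∈ ℝ^r with v* ≥ 0 such that ∇g(z*) + Σᵢ uᵢ* ∇gᵢ(z*) + Σⱼ vⱼ* ∇hⱼ(z*) = 0 (as linear functionals on E) and uᵢ* gᵢ(z*) = 0 for every i = 1,…,s. -/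
open Finset Filter Topology

/-- **Farkas' lemma** for finitely many linear functionals over an ordered field. -/
theorem exists_nonneg_sum_smul_eq_of_forall_nonpos {𝕜 V ι : Type*} [Field 𝕜] [LinearOrder 𝕜]
    [IsStrictOrderedRing 𝕜] [AddCommGroup V] [Module 𝕜 V] (t : Finset ι)
    (a : ι → V →ₗ[𝕜] 𝕜) (b : V →ₗ[𝕜] 𝕜)
    (h : ∀ x, (∀ i ∈ t, a i x ≤ 0) → b x ≤ 0) :
    ∃ u : ι → 𝕜, (∀ i, 0 ≤ u i) ∧ (∀ i ∉ t, u i = 0) ∧ ∑ i ∈ t, u i • a i = b := by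
  classical
  induction t using Finset.induction_on generalizing a b with
  | empty =>
    refine ⟨0, fun _ => le_rfl, fun _ _ => rfl, ?_⟩
    ext x
    have h₁ := h x (by simp)
    have h₂ := h (-x) (by simp)
    rw [map_neg] at h₂
    simpa using le_antisymm (neg_nonpos.mp h₂) h₁
  | insert m t hm ih =>
    by_cases hb : ∀ x, (∀ i ∈ t, a i x ≤ 0) → b x ≤ 0
    · obtain ⟨u, hu, hut, hsum⟩ := ih a b hb
      refine ⟨u, hu, fun i hi => hut i fun hi' => hi (mem_insert_of_mem hi'), ?_⟩
      rw [sum_insert hm, hut m hm, zero_smul, zero_add, hsum]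
    push Not at hb
    obtain ⟨y, hy, hby⟩ := hb
    have hmy : 0 < a m y := by
      by_contra! hmy
      exact hby.not_ge (h y (by simpa [hmy] using hy))
    -- Project along `y` onto the kernel of `a m`.
    obtain ⟨u, hu, hut, hsum⟩ := ih (fun i => a i - (a i y / a m y) • a m)
      (b - (b y / a m y) • a m) (by
        intro x hx
        have key : ∀ f : V →ₗ[𝕜] 𝕜,
            f (x - (a m x / a m y) • y) = (f - (f y / a m y) • a m) x := by
          intro f
          simp only [map_sub, map_smul, smul_eq_mul, LinearMap.sub_apply, LinearMap.smul_apply]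
          ring
        rw [← key]
        refine h _ fun i hi => ?_
        rcases mem_insert.mp hi with rfl | hi
        · rw [key, div_self hmy.ne', one_smul, sub_self, LinearMap.zero_apply]
        · rw [key]
          exact hx i hi)
    refine ⟨Function.update u m (b y / a m y - ∑ i ∈ t, u i * (a i y / a m y)), ?_, ?_, ?_⟩
    · intro i
      rcases eq_or_ne i m with rfl | hi
      · rw [Function.update_self, sub_nonneg]
        refine (sum_nonpos fun j hj => ?_).trans (div_pos hby hmy).le
        exact mul_nonpos_of_nonneg_of_nonpos (hu j) (div_nonpos_of_nonpos_of_nonneg (hy j hj) hmy.le)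
      · rw [Function.update_of_ne hi]
        exact hu i
    · intro i hi
      rw [mem_insert, not_or] at hi
      rw [Function.update_of_ne hi.1, hut i hi.2]
    · have hcongr : ∑ i ∈ t, Function.update u m
          (b y / a m y - ∑ i ∈ t, u i * (a i y / a m y)) i • a i = ∑ i ∈ t, u i • a i :=
        sum_congr rfl fun i hi => by rw [Function.update_of_ne (ne_of_mem_of_not_mem hi hm)]
      rw [sum_insert hm, hcongr, Function.update_self]
      simp only [smul_sub, sum_sub_distrib, smul_smul, ← sum_smul] at hsum
      ext x
      have hx := LinearMap.congr_fun hsum x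
      simp only [LinearMap.add_apply, LinearMap.sub_apply, LinearMap.smul_apply,
        smul_eq_mul] at hx ⊢
      linear_combination hx

/-- A convex function lies above its tangent hyperplanes. -/
theorem ConvexOn.add_fderiv_sub_le {E : Type*} [NormedAddCommGroup E] [NormedSpace ℝ E]
    {f : E → ℝ} (hf : ConvexOn ℝ Set.univ f) {x : E} (hfx : DifferentiableAt ℝ f x) (y : E) :
    f x + fderiv ℝ f x (y - x) ≤ f y := by
  have hline : HasDerivAt (f ∘ AffineMap.lineMap (k := ℝ) x y) (fderiv ℝ f x (y - x)) 0 := by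
    refine HasFDerivAt.comp_hasDerivAt (0 : ℝ) ?_ AffineMap.hasDerivAt_lineMap
    simpa using hfx.hasFDerivAt
  have hconv : ConvexOn ℝ Set.univ (f ∘ AffineMap.lineMap (k := ℝ) x y) :=
    hf.comp_affineMap (AffineMap.lineMap x y)
  have := hconv.le_slope_of_hasDerivAt (Set.mem_univ 0) (Set.mem_univ 1) one_pos hline
  simp only [slope_def_field, Function.comp_apply, AffineMap.lineMap_apply_one,
    AffineMap.lineMap_apply_zero, sub_zero, div_one] at this
  linarith

/-- Theorem 1 (sufficient optimality via linearized subproblem) for the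
constrained convex problem: minimize `g` over
`X = {z | ∀ i, G i z ≤ 0 ∧ ∀ j, H j z = 0}`. If `ds` minimizes
`d ↦ (fderiv ℝ g zs) d` over the cone
`T(zs) = {d | ∀ i, G i zs + (fderiv ℝ (G i) zs) d ≤ 0 ∧ ∀ j, (fderiv ℝ (H j) zs) d ≤ 0}`
and the optimal value is nonnegative, then `zs` is a global minimizer of `g` on `X`
and KKT multipliers `u ≥ 0`, `v ≥ 0` exist. -/
theorem stmt_0 {n s r : ℕ}
    (g : EuclideanSpace ℝ (Fin n) → ℝ)
    (G : Fin s → EuclideanSpace ℝ (Fin n) → ℝ)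
    (H : Fin r → EuclideanSpace ℝ (Fin n) → ℝ)
    (hg : ConvexOn ℝ Set.univ g) (hgd : Differentiable ℝ g)
    (hG : ∀ i, ConvexOn ℝ Set.univ (G i)) (hGd : ∀ i, Differentiable ℝ (G i))
    (hH : ∀ j, ConvexOn ℝ Set.univ (H j)) (hHd : ∀ j, Differentiable ℝ (H j))
    (X : Set (EuclideanSpace ℝ (Fin n)))
    (hX : X = {z | (∀ i, G i z ≤ 0) ∧ (∀ j, H j z = 0)})
    (zs : EuclideanSpace ℝ (Fin n)) (hzs : zs ∈ X)
    (T : Set (EuclideanSpace ℝ (Fin n)))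
    (hT : T = {d | (∀ i, G i zs + fderiv ℝ (G i) zs d ≤ 0) ∧
                   (∀ j, fderiv ℝ (H j) zs d ≤ 0)})
    (ds : EuclideanSpace ℝ (Fin n)) (hds : ds ∈ T)
    (hmin : ∀ d ∈ T, fderiv ℝ g zs ds ≤ fderiv ℝ g zs d)
    (hnonneg : 0 ≤ fderiv ℝ g zs ds) :
    (∀ z ∈ X, g zs ≤ g z) ∧
    ∃ (u : Fin s → ℝ) (v : Fin r → ℝ), (∀ i, 0 ≤ u i) ∧ (∀ j, 0 ≤ v j) ∧
      (fderiv ℝ g zs + ∑ i, u i • fderiv ℝ (G i) zs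
        + ∑ j, v j • fderiv ℝ (H j) zs = 0) ∧
      (∀ i, u i * G i zs = 0) := by
  have hzX := hzs
  rw [hX] at hzX
  obtain ⟨hGz, hHz⟩ := hzX
  have hT_nonneg : ∀ d, (∀ i, G i zs + fderiv ℝ (G i) zs d ≤ 0) →
      (∀ j, fderiv ℝ (H j) zs d ≤ 0) → 0 ≤ fderiv ℝ g zs d :=
    fun d h₁ h₂ => hnonneg.trans (hmin d (by rw [hT]; exact ⟨h₁, h₂⟩))
  refine ⟨fun z hz => ?_, ?_⟩
  · rw [hX] at hz
    have h₁ := hT_nonneg (z - zs)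
      (fun i => ((hG i).add_fderiv_sub_le (hGd i zs) z).trans (hz.1 i))
      (fun j => by
        have := (hH j).add_fderiv_sub_le (hHd j zs) z
        rwa [hHz j, hz.2 j, zero_add] at this)
    linarith [hg.add_fderiv_sub_le (hgd zs) z]
  · obtain ⟨w, hw, hw_inactive, hsum⟩ := exists_nonneg_sum_smul_eq_of_forall_nonpos
      ((univ.filter fun i => G i zs = 0).disjSum univ)
      (Sum.elim (fun i => (fderiv ℝ (G i) zs).toLinearMap)
        (fun j => (fderiv ℝ (H j) zs).toLinearMap))
      (-(fderiv ℝ g zs).toLinearMap) (by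
        intro d hd
        have hdG : ∀ i, G i zs = 0 → fderiv ℝ (G i) zs d ≤ 0 := fun i hi =>
          hd (Sum.inl i) (by simpa using hi)
        have hdH : ∀ j, fderiv ℝ (H j) zs d ≤ 0 := fun j => hd (Sum.inr j) (by simp)
        -- Constraints inactive at `zs` survive a short step along `d`.
        have hstep : ∀ᶠ c : ℝ in 𝓝[>] 0, ∀ i, G i zs + c * fderiv ℝ (G i) zs d ≤ 0 := by
          refine eventually_all.mpr fun i => ?_
          rcases (hGz i).eq_or_lt with hi | hi
          · filter_upwards [self_mem_nhdsWithin] with c hc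
            rw [hi, zero_add]
            exact mul_nonpos_of_nonneg_of_nonpos (le_of_lt hc) (hdG i hi)
          · have hcont : Continuous fun c : ℝ => G i zs + c * fderiv ℝ (G i) zs d := by fun_prop
            have hlt : ∀ᶠ c : ℝ in 𝓝 0, G i zs + c * fderiv ℝ (G i) zs d < 0 :=
              hcont.continuousAt.eventually_lt continuousAt_const (by simpa using hi)
            exact (hlt.filter_mono nhdsWithin_le_nhds).mono fun _ => le_of_lt
        obtain ⟨c, hcG, hc⟩ := (hstep.and self_mem_nhdsWithin).exists
        have hc : 0 < c := hc
        have h₁ := hT_nonneg (c • d) (fun i => by simpa using hcG i)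
          (fun j => by simpa using mul_nonpos_of_nonneg_of_nonpos hc.le (hdH j))
        rw [map_smul, smul_eq_mul] at h₁
        simpa using nonneg_of_mul_nonneg_right h₁ hc)
    refine ⟨fun i => w (Sum.inl i), fun j => w (Sum.inr j), fun i => hw _, fun j => hw _, ?_, ?_⟩
    · rw [sum_subset (subset_univ _) (fun i _ hi => by rw [hw_inactive i hi, zero_smul]),
        Fintype.sum_sum_type] at hsum
      ext d
      have hd := LinearMap.congr_fun hsum d
      simp at hd ⊢
      linarith
    · intro i
      by_cases hi : G i zs = 0
      · rw [hi, mul_zero]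
      · exact mul_eq_zero_of_left (hw_inactive (Sum.inl i) (by simpa using hi)) _
end

section
/- Let z* ∈ X. There exists d* ∈ E minimizing d ↦ ∇g(z*)·d over T₀(z*) with ∇g(z*)·d* ≥ 0 if and only if there exist u* ∈ ℝ^s with u* ≥ 0 and v* ∈ ℝ^r (not necessarily nonnegative) such that ∇g(z*) + Σᵢ uᵢ* ∇gᵢ(z*) + Σⱼ vⱼ* ∇hⱼ(z*) = 0 and uᵢ* gᵢ(z*) = 0 for every i = 1,…,s. -/
/-- **Farkas' lemma** for finitely many linear functionals on a real vector space. -/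
theorem farkas_finset {ι W : Type*} [AddCommGroup W] [Module ℝ W] (t : Finset ι)
    (a : ι → W →ₗ[ℝ] ℝ) (b : W →ₗ[ℝ] ℝ)
    (hab : ∀ x, (∀ i ∈ t, a i x ≤ 0) → b x ≤ 0) :
    ∃ u : ι → ℝ, (∀ i, 0 ≤ u i) ∧ b = ∑ i ∈ t, u i • a i := by
  classical
  induction t using Finset.induction_on generalizing a b with
  | empty =>
    refine ⟨0, fun _ => le_rfl, LinearMap.ext fun x => ?_⟩
    have h₁ := hab x (by simp)
    have h₂ := hab (-x) (by simp)
    simp only [map_neg] at h₂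
    simp only [Finset.sum_empty, LinearMap.zero_apply]
    linarith
  | insert k t hk ih =>
    by_cases hb : ∀ x, (∀ i ∈ t, a i x ≤ 0) → b x ≤ 0
    · obtain ⟨u, hu, rfl⟩ := ih a b hb
      refine ⟨Function.update u k 0, fun i => ?_, ?_⟩
      · by_cases hi : i = k
        · simp [hi]
        · simpa [hi] using hu i
      · rw [Finset.sum_insert hk, Function.update_self, zero_smul, zero_add]
        refine Finset.sum_congr rfl fun i hi => ?_
        rw [Function.update_of_ne (ne_of_mem_of_not_mem hi hk)]
    push Not at hb
    obtain ⟨y, hy, hby⟩ := hb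
    have hky : 0 < a k y := by
      by_contra! hc
      refine hby.not_ge (hab y fun i hi => ?_)
      rcases Finset.mem_insert.1 hi with rfl | hi
      exacts [hc, hy i hi]
    obtain ⟨z, hz, hbz, hkz⟩ : ∃ z, (∀ i ∈ t, a i z ≤ 0) ∧ 0 < b z ∧ a k z = 1 := by
      refine ⟨(a k y)⁻¹ • y, fun i hi => ?_, ?_, ?_⟩
      · simpa using mul_nonpos_of_nonneg_of_nonpos (inv_pos.2 hky).le (hy i hi)
      · simpa using mul_pos (inv_pos.2 hky) hby
      · simp [hky.ne']
    obtain ⟨u, hu, hbu⟩ := ih (fun i => a i - a i z • a k) (b - b z • a k) fun x hx => by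
      have h := hab (x - a k x • z) fun i hi => by
        rcases Finset.mem_insert.1 hi with rfl | hi
        · simp [hkz]
        · have := hx i hi
          simp only [LinearMap.sub_apply, LinearMap.smul_apply, smul_eq_mul] at this
          simp only [map_sub, map_smul, smul_eq_mul]
          linarith
      simp only [map_sub, map_smul, smul_eq_mul] at h
      simp only [LinearMap.sub_apply, LinearMap.smul_apply, smul_eq_mul]
      linarith
    have hsum : ∑ i ∈ t, u i * a i z ≤ 0 :=
      Finset.sum_nonpos fun i hi => mul_nonpos_of_nonneg_of_nonpos (hu i) (hz i hi)
    refine ⟨Function.update u k (b z - ∑ i ∈ t, u i * a i z), fun i => ?_, ?_⟩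
    · by_cases hi : i = k
      · subst hi
        rw [Function.update_self]
        linarith
      · simpa [hi] using hu i
    · have hupd : ∑ i ∈ t, Function.update u k (b z - ∑ i ∈ t, u i * a i z) i • a i =
          ∑ i ∈ t, u i • a i :=
        Finset.sum_congr rfl fun i hi => by
          rw [Function.update_of_ne (ne_of_mem_of_not_mem hi hk)]
      simp only [smul_sub, smul_smul, Finset.sum_sub_distrib, ← Finset.sum_smul] at hbu
      rw [Finset.sum_insert hk, Function.update_self, hupd]
      linear_combination (norm := module) hbu

/-- **Farkas' lemma** with finitely many inequality and equality constraints. -/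
theorem farkas_inequalities_equalities {ι κ W : Type*} [Fintype κ] [AddCommGroup W]
    [Module ℝ W] (t : Finset ι) (a : ι → W →ₗ[ℝ] ℝ) (c : κ → W →ₗ[ℝ] ℝ) (b : W →ₗ[ℝ] ℝ)
    (hab : ∀ x, (∀ i ∈ t, a i x ≤ 0) → (∀ j, c j x = 0) → b x ≤ 0) :
    ∃ (u : ι → ℝ) (v : κ → ℝ), (∀ i, 0 ≤ u i) ∧
      b = ∑ i ∈ t, u i • a i + ∑ j, v j • c j := by
  obtain ⟨w, hw, hb⟩ := farkas_finset (t.disjSum (Finset.univ : Finset (κ ⊕ κ)))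
    (Sum.elim a (Sum.elim c fun j => -c j)) b fun x hx => by
      simp only [Finset.mem_disjSum] at hx
      refine hab x (fun i hi => by simpa using hx (.inl i) (by simpa using hi)) fun j => ?_
      have h₁ := hx (.inr (.inl j)) (by simp)
      have h₂ := hx (.inr (.inr j)) (by simp)
      simp only [Sum.elim_inr, Sum.elim_inl, LinearMap.neg_apply] at h₁ h₂
      linarith
  refine ⟨fun i => w (.inl i), fun j => w (.inr (.inl j)) - w (.inr (.inr j)),
    fun i => hw _, ?_⟩
  have hsub : ∑ j, (w (.inr (.inl j)) - w (.inr (.inr j))) • c j =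
      ∑ j, w (.inr (.inl j)) • c j - ∑ j, w (.inr (.inr j)) • c j := by
    rw [← Finset.sum_sub_distrib]
    exact Finset.sum_congr rfl fun j _ => by module
  rw [hsub]
  simpa [Finset.sum_disjSum, ← sub_eq_add_neg] using hb

/-- Theorem 6: for a feasible point `zs`, the linearized subproblem over `T₀(zs)`
has a minimizer with nonnegative optimal value if and only if KKT multipliers
`u ≥ 0`, `v ∈ ℝ^r` (not necessarily nonnegative) exist. -/
theorem stmt_8 {n s r : ℕ}
    (g : EuclideanSpace ℝ (Fin n) → ℝ)
    (G : Fin s → EuclideanSpace ℝ (Fin n) → ℝ)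
    (H : Fin r → EuclideanSpace ℝ (Fin n) → ℝ)
    (hg : ConvexOn ℝ Set.univ g) (hgd : Differentiable ℝ g)
    (hG : ∀ i, ConvexOn ℝ Set.univ (G i)) (hGd : ∀ i, Differentiable ℝ (G i))
    (hH : ∀ j, ConvexOn ℝ Set.univ (H j)) (hHd : ∀ j, Differentiable ℝ (H j))
    (X : Set (EuclideanSpace ℝ (Fin n)))
    (hX : X = {z | (∀ i, G i z ≤ 0) ∧ (∀ j, H j z = 0)})
    (zs : EuclideanSpace ℝ (Fin n)) (hzs : zs ∈ X)
    (T₀ : Set (EuclideanSpace ℝ (Fin n)))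
    (hT₀ : T₀ = {d | (∀ i, G i zs + fderiv ℝ (G i) zs d ≤ 0) ∧
                     (∀ j, fderiv ℝ (H j) zs d = 0)}) :
    (∃ ds ∈ T₀, (∀ d ∈ T₀, fderiv ℝ g zs ds ≤ fderiv ℝ g zs d) ∧
        0 ≤ fderiv ℝ g zs ds) ↔
    (∃ (u : Fin s → ℝ) (v : Fin r → ℝ), (∀ i, 0 ≤ u i) ∧
      (fderiv ℝ g zs + ∑ i, u i • fderiv ℝ (G i) zs
        + ∑ j, v j • fderiv ℝ (H j) zs = 0) ∧
      (∀ i, u i * G i zs = 0)) := by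
  subst hX hT₀
  obtain ⟨hGz, -⟩ := hzs
  constructor
  · rintro ⟨ds, -, hmin, hnonneg⟩
    obtain ⟨u, v, hu, huv⟩ := farkas_inequalities_equalities
      (Finset.univ.filter fun i => G i zs = 0) (fun i => (fderiv ℝ (G i) zs).toLinearMap)
      (fun j => (fderiv ℝ (H j) zs).toLinearMap) (-(fderiv ℝ g zs).toLinearMap)
      fun d hd hd' => by
        simp only [Finset.mem_filter, Finset.mem_univ, true_and,
          ContinuousLinearMap.coe_coe] at hd hd'
        have hstep : ∀ᶠ τ : ℝ in nhdsWithin 0 (Set.Ioi 0),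
            ∀ i, G i zs + τ * fderiv ℝ (G i) zs d ≤ 0 := by
          refine Filter.eventually_all.2 fun i => ?_
          rcases (hGz i).eq_or_lt with hi | hi
          · filter_upwards [self_mem_nhdsWithin] with τ hτ
            rw [hi, zero_add]
            exact mul_nonpos_of_nonneg_of_nonpos (le_of_lt hτ) (hd i hi)
          · have hcont : Continuous fun τ : ℝ => G i zs + τ * fderiv ℝ (G i) zs d := by fun_prop
            have := (hcont.tendsto 0).eventually_lt_const (by simpa using hi)
            exact (this.filter_mono nhdsWithin_le_nhds).mono fun _ h => h.le
        obtain ⟨τ, hτ, hτ0⟩ := (hstep.and self_mem_nhdsWithin).exists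
        have h := hnonneg.trans (hmin (τ • d) ⟨fun i => by simpa using hτ i,
          fun j => by simp [hd' j]⟩)
        rw [map_smul, smul_eq_mul] at h
        simpa using nonneg_of_mul_nonneg_right h hτ0
    refine ⟨fun i => if G i zs = 0 then u i else 0, v, fun i => ?_, ?_, fun i => ?_⟩
    · dsimp only
      split_ifs
      exacts [hu i, le_rfl]
    · ext1 d
      have h := LinearMap.congr_fun huv d
      simp only [Finset.sum_filter, LinearMap.neg_apply, LinearMap.add_apply, LinearMap.sum_apply,
        LinearMap.smul_apply, ContinuousLinearMap.coe_coe] at h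
      simp only [ite_smul, zero_smul, add_apply, sum_apply,
        smul_apply, zero_apply]
      simp only [apply_ite (fun L : EuclideanSpace ℝ (Fin n) →L[ℝ] ℝ => L d),
        apply_ite (fun L : EuclideanSpace ℝ (Fin n) →ₗ[ℝ] ℝ => L d),
        smul_apply, zero_apply, LinearMap.smul_apply,
        LinearMap.zero_apply, ContinuousLinearMap.coe_coe] at h ⊢
      linarith
    · dsimp only
      split_ifs with hi <;> simp [hi]
  · rintro ⟨u, v, hu, huv, hcomp⟩
    refine ⟨0, ⟨fun i => by simpa using hGz i, by simp⟩, fun d ⟨hd, hd'⟩ => ?_, by simp⟩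
    have h := DFunLike.congr_fun huv d
    simp only [add_apply, sum_apply,
      smul_apply, zero_apply, hd', smul_eq_mul,
      mul_zero, Finset.sum_const_zero] at h
    have hsum : ∑ i, u i * fderiv ℝ (G i) zs d ≤ 0 := Finset.sum_nonpos fun i _ => by
      have := mul_nonpos_of_nonneg_of_nonpos (hu i) (hd i)
      rwa [mul_add, hcomp i, zero_add] at this
    rw [map_zero]
    linarith
end

section
/- Let z* ∈ X, u* ∈ ℝ^s with u* ≥ 0 and v* ∈ ℝ^r. If g(z*) ≤ L(z; u*, v*) for every z ∈ E (i.e. g(z*) equals the dual value θ(u*, v*)), then: (a) ∇g(z*) + Σᵢ uᵢ* ∇gᵢ(z*) + Σⱼ vⱼ* ∇hⱼ(z*) = 0; (b) uᵢ* gᵢ(z*) = 0 for every i = 1,…,s; and (c) g(z*) ≤ g(z) for every z ∈ X, i.e. z* is a global optimal solution of minimizing g over X. -/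
/-- Theorem 7(ii): if the feasible point `zs` satisfies
`g zs ≤ L(z; u, v)` for all `z` (i.e. `g zs` equals the dual value `θ(u, v)`),
then stationarity and complementary slackness hold and `zs` is a global
minimizer of `g` over `X`. -/
theorem stmt_11 {n s r : ℕ}
    (g : EuclideanSpace ℝ (Fin n) → ℝ)
    (G : Fin s → EuclideanSpace ℝ (Fin n) → ℝ)
    (H : Fin r → EuclideanSpace ℝ (Fin n) → ℝ)
    (hg : ConvexOn ℝ Set.univ g) (hgd : Differentiable ℝ g)
    (hG : ∀ i, ConvexOn ℝ Set.univ (G i)) (hGd : ∀ i, Differentiable ℝ (G i))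
    (hH : ∀ j, ConvexOn ℝ Set.univ (H j)) (hHd : ∀ j, Differentiable ℝ (H j))
    (X : Set (EuclideanSpace ℝ (Fin n)))
    (hX : X = {z | (∀ i, G i z ≤ 0) ∧ (∀ j, H j z = 0)})
    (zs : EuclideanSpace ℝ (Fin n)) (hzs : zs ∈ X)
    (L : EuclideanSpace ℝ (Fin n) → ℝ)
    (u : Fin s → ℝ) (v : Fin r → ℝ) (hu : ∀ i, 0 ≤ u i)
    (hL : ∀ z, L z = g z + ∑ i, u i * G i z + ∑ j, v j * H j z)
    (hdual : ∀ z, g zs ≤ L z) :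
    (fderiv ℝ g zs + ∑ i, u i • fderiv ℝ (G i) zs
      + ∑ j, v j • fderiv ℝ (H j) zs = 0) ∧
    (∀ i, u i * G i zs = 0) ∧
    (∀ z ∈ X, g zs ≤ g z) := by
  subst hX
  have nonpos : ∀ z, (∀ i, G i z ≤ 0) → ∀ i ∈ Finset.univ, u i * G i z ≤ 0 :=
    fun z hz i _ => mul_nonpos_of_nonneg_of_nonpos (hu i) (hz i)
  have L_eq : ∀ z, (∀ j, H j z = 0) → L z = g z + ∑ i, u i * G i z :=
    fun z hz => by simp [hL, hz]
  have sum_eq_zero : ∑ i, u i * G i zs = 0 :=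
    le_antisymm (Finset.sum_nonpos (nonpos zs hzs.1))
      (by linarith [hdual zs, L_eq zs hzs.2])
  refine ⟨?_, fun i => ?_, fun z hz => ?_⟩
  · have hmin : IsLocalMin L zs := Filter.Eventually.of_forall fun z => by
      rw [L_eq zs hzs.2, sum_eq_zero, add_zero]
      exact hdual z
    refine hmin.hasFDerivAt_eq_zero ?_
    rw [funext hL]
    exact ((hgd zs).hasFDerivAt.add (HasFDerivAt.fun_sum fun i _ =>
      ((hGd i zs).hasFDerivAt.const_mul (u i)))).add
      (HasFDerivAt.fun_sum fun j _ => ((hHd j zs).hasFDerivAt.const_mul (v j)))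
  · exact (Finset.sum_eq_zero_iff_of_nonpos (nonpos zs hzs.1)).1 sum_eq_zero i (Finset.mem_univ i)
  · linarith [hdual z, L_eq z hz.2, Finset.sum_nonpos (nonpos z hz.1)]
end

section
/- (Strong duality.) Let z* ∈ X, u* ∈ ℝ^s with u* ≥ 0 and v* ∈ ℝ^r with v* ≥ 0. Then the two conditions [∇g(z*) + Σᵢ uᵢ* ∇gᵢ(z*) + Σⱼ vⱼ* ∇hⱼ(z*) = 0 and uᵢ* gᵢ(z*) = 0 for all i] hold if and only if g(z*) ≤ L(z; u*, v*) for every z ∈ E (i.e. g(z*) equals the dual value θ₊(u*, v*)). Furthermore, in that case g(z*) ≤ g(z) for every z ∈ X, i.e. z* is a global optimal solution of minimizing g over X. -/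
/-- A convex function on a real normed space attains its global minimum at any point where its
Fréchet derivative vanishes. -/
theorem ConvexOn.le_of_hasFDerivAt_zero {E : Type*} [NormedAddCommGroup E] [NormedSpace ℝ E]
    {f : E → ℝ} {a : E} (hf : ConvexOn ℝ Set.univ f)
    (hd : HasFDerivAt f (0 : E →L[ℝ] ℝ) a) (z : E) : f a ≤ f z := by
  have hline : ConvexOn ℝ Set.univ (f ∘ AffineMap.lineMap (k := ℝ) a z) := by
    simpa using hf.comp_affineMap (AffineMap.lineMap (k := ℝ) a z)
  have hderiv : HasDerivAt (f ∘ AffineMap.lineMap (k := ℝ) a z) 0 0 := by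
    have hd' : HasFDerivAt f (0 : E →L[ℝ] ℝ) (AffineMap.lineMap (k := ℝ) a z (0 : ℝ)) := by
      simpa using hd
    simpa using hd'.comp_hasDerivAt (0 : ℝ) AffineMap.hasDerivAt_lineMap
  have hslope := hline.le_slope_of_hasDerivAt (Set.mem_univ 0) (Set.mem_univ 1) one_pos hderiv
  simpa [slope_def_field] using hslope

/-- A nonnegative combination of convex functions is convex. -/
theorem ConvexOn.sum_mul {E ι : Type*} [AddCommGroup E] [Module ℝ E] {S : Set E}
    (hS : Convex ℝ S) (t : Finset ι) {c : ι → ℝ} {F : ι → E → ℝ} (hc : ∀ i, 0 ≤ c i)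
    (hF : ∀ i, ConvexOn ℝ S (F i)) : ConvexOn ℝ S fun z => ∑ i ∈ t, c i * F i z := by
  induction t using Finset.cons_induction with
  | empty => simpa using convexOn_const 0 hS
  | cons i t hi ih =>
    simp only [Finset.sum_cons]
    exact ((hF i).smul (hc i)).add ih

/-- Theorem 7(iv) (strong duality): at a feasible `zs` with multipliers
`u ≥ 0`, `v ≥ 0`, stationarity together with complementary slackness holds if
and only if `g zs ≤ L(z; u, v)` for all `z` (i.e. `g zs = θ₊(u, v)`); moreover,
in that case `zs` is a global minimizer of `g` over `X`. -/
theorem stmt_13 {n s r : ℕ}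
    (g : EuclideanSpace ℝ (Fin n) → ℝ)
    (G : Fin s → EuclideanSpace ℝ (Fin n) → ℝ)
    (H : Fin r → EuclideanSpace ℝ (Fin n) → ℝ)
    (hg : ConvexOn ℝ Set.univ g) (hgd : Differentiable ℝ g)
    (hG : ∀ i, ConvexOn ℝ Set.univ (G i)) (hGd : ∀ i, Differentiable ℝ (G i))
    (hH : ∀ j, ConvexOn ℝ Set.univ (H j)) (hHd : ∀ j, Differentiable ℝ (H j))
    (X : Set (EuclideanSpace ℝ (Fin n)))
    (hX : X = {z | (∀ i, G i z ≤ 0) ∧ (∀ j, H j z = 0)})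
    (zs : EuclideanSpace ℝ (Fin n)) (hzs : zs ∈ X)
    (L : EuclideanSpace ℝ (Fin n) → ℝ)
    (u : Fin s → ℝ) (v : Fin r → ℝ) (hu : ∀ i, 0 ≤ u i) (hv : ∀ j, 0 ≤ v j)
    (hL : ∀ z, L z = g z + ∑ i, u i * G i z + ∑ j, v j * H j z) :
    (((fderiv ℝ g zs + ∑ i, u i • fderiv ℝ (G i) zs
        + ∑ j, v j • fderiv ℝ (H j) zs = 0) ∧ (∀ i, u i * G i zs = 0)) ↔
      (∀ z, g zs ≤ L z)) ∧
    ((∀ z, g zs ≤ L z) → ∀ z ∈ X, g zs ≤ g z) := by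
  subst hX
  obtain ⟨hGz, hHz⟩ := hzs
  have hconv : ConvexOn ℝ Set.univ L := by
    rw [funext hL]
    exact (hg.add (ConvexOn.sum_mul convex_univ _ hu hG)).add
      (ConvexOn.sum_mul convex_univ _ hv hH)
  have hderiv : HasFDerivAt L (fderiv ℝ g zs + ∑ i, u i • fderiv ℝ (G i) zs
      + ∑ j, v j • fderiv ℝ (H j) zs) zs := by
    rw [funext hL]
    exact ((hgd zs).hasFDerivAt.add
      (HasFDerivAt.fun_sum fun i _ => (hGd i zs).hasFDerivAt.const_mul (u i))).add
      (HasFDerivAt.fun_sum fun j _ => (hHd j zs).hasFDerivAt.const_mul (v j))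
  have hterm : ∀ z, (∀ i, G i z ≤ 0) → ∀ i, u i * G i z ≤ 0 := fun z hz i =>
    mul_nonpos_of_nonneg_of_nonpos (hu i) (hz i)
  have hle : ∀ z, (∀ i, G i z ≤ 0) → (∀ j, H j z = 0) → L z ≤ g z := by
    intro z hz hz'
    have hsum : ∑ i, u i * G i z ≤ 0 := Finset.sum_nonpos fun i _ => hterm z hz i
    simpa [hL z, hz'] using hsum
  refine ⟨⟨?_, fun hmin => ⟨?_, ?_⟩⟩, fun hmin z hz => (hmin z).trans (hle z hz.1 hz.2)⟩
  · rintro ⟨hstat, hslack⟩ z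
    have hLzs : L zs = g zs := by simp [hL, hslack, hHz]
    rw [hstat] at hderiv
    exact hLzs ▸ hconv.le_of_hasFDerivAt_zero hderiv z
  · have hlocal : IsLocalMin L zs :=
      Filter.Eventually.of_forall fun z => (hle zs hGz hHz).trans (hmin z)
    exact hlocal.hasFDerivAt_eq_zero hderiv
  · have hsum : 0 ≤ ∑ i, u i * G i zs := by simpa [hL, hHz] using hmin zs
    have hzero := hsum.antisymm' (Finset.sum_nonpos fun i _ => hterm zs hGz i)
    exact fun i => (Finset.sum_eq_zero_iff_of_nonpos fun i _ => hterm zs hGz i).1 hzero i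
      (Finset.mem_univ i)
end

section
/- Let z* ∈ X, u* ∈ ℝ^s with u* ≥ 0 and v* ∈ ℝ^r with v* ≥ 0, and suppose uᵢ* gᵢ(z*) = 0 for every i = 1,…,s. Then the stationarity equation ∇g(z*) + Σᵢ uᵢ* ∇gᵢ(z*) + Σⱼ vⱼ* ∇hⱼ(z*) = 0 holds if and only if for every penalty parameter ρ > 0, z* is a global minimizer over E of the augmented Lagrangian penalty function A(z; u*, v*, ρ) = L(z; u*, v*) + ρ Σᵢ (max{gᵢ(z), 0})² + ρ Σⱼ hⱼ(z)². -/
/-- The gradient inequality: a convex function lies above its tangent at any point. -/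
theorem ConvexOn.add_apply_sub_le_of_hasFDerivAt {E : Type*} [NormedAddCommGroup E]
    [NormedSpace ℝ E] {f : E → ℝ} {f' : E →L[ℝ] ℝ} {x : E}
    (hf : ConvexOn ℝ Set.univ f) (hx : HasFDerivAt f f' x) (y : E) :
    f x + f' (y - x) ≤ f y := by
  have hconv : ConvexOn ℝ Set.univ (f ∘ AffineMap.lineMap (k := ℝ) x y) :=
    hf.comp_affineMap (AffineMap.lineMap x y)
  have hderiv : HasDerivAt (f ∘ AffineMap.lineMap (k := ℝ) x y) (f' (y - x)) 0 :=
    HasFDerivAt.comp_hasDerivAt (0 : ℝ) (by simpa using hx) AffineMap.hasDerivAt_lineMap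
  have hslope := hconv.le_slope_of_hasDerivAt (Set.mem_univ _) (Set.mem_univ _) one_pos hderiv
  simp only [slope_def_field, Function.comp_apply, AffineMap.lineMap_apply_one,
    AffineMap.lineMap_apply_zero, sub_zero, div_one] at hslope
  linarith

/-- If `a ≤ b + ρ * p` for every `ρ > 0`, where `p ≥ 0`, then `a ≤ b`. -/
theorem le_of_forall_pos_le_add_mul {a b p : ℝ} (hp : 0 ≤ p)
    (h : ∀ ρ > 0, a ≤ b + ρ * p) : a ≤ b := by
  refine le_of_forall_pos_le_add fun ε hε => (h (ε / (p + 1)) (by positivity)).trans ?_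
  gcongr
  rw [div_mul_eq_mul_div, div_le_iff₀ (by positivity)]
  nlinarith

/-- Theorem 8(ii): at a feasible `zs` with multipliers `u ≥ 0`, `v ≥ 0`
satisfying complementary slackness, the stationarity equation holds if and only
if for every penalty parameter `ρ > 0`, `zs` globally minimizes the augmented
Lagrangian penalty function
`A(z; u, v, ρ) = L(z; u, v) + ρ Σᵢ (max{gᵢ(z),0})² + ρ Σⱼ hⱼ(z)²`. -/
theorem stmt_17 {n s r : ℕ}
    (g : EuclideanSpace ℝ (Fin n) → ℝ)
    (G : Fin s → EuclideanSpace ℝ (Fin n) → ℝ)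
    (H : Fin r → EuclideanSpace ℝ (Fin n) → ℝ)
    (hg : ConvexOn ℝ Set.univ g) (hgd : Differentiable ℝ g)
    (hG : ∀ i, ConvexOn ℝ Set.univ (G i)) (hGd : ∀ i, Differentiable ℝ (G i))
    (hH : ∀ j, ConvexOn ℝ Set.univ (H j)) (hHd : ∀ j, Differentiable ℝ (H j))
    (X : Set (EuclideanSpace ℝ (Fin n)))
    (hX : X = {z | (∀ i, G i z ≤ 0) ∧ (∀ j, H j z = 0)})
    (zs : EuclideanSpace ℝ (Fin n)) (hzs : zs ∈ X)
    (u : Fin s → ℝ) (v : Fin r → ℝ) (hu : ∀ i, 0 ≤ u i) (hv : ∀ j, 0 ≤ v j)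
    (hcomp : ∀ i, u i * G i zs = 0)
    (L : EuclideanSpace ℝ (Fin n) → ℝ)
    (hL : ∀ z, L z = g z + ∑ i, u i * G i z + ∑ j, v j * H j z)
    (A : EuclideanSpace ℝ (Fin n) → ℝ → ℝ)
    (hA : ∀ z ρ, A z ρ = L z + ρ * ∑ i, (max (G i z) 0) ^ 2
        + ρ * ∑ j, (H j z) ^ 2) :
    (fderiv ℝ g zs + ∑ i, u i • fderiv ℝ (G i) zs
      + ∑ j, v j • fderiv ℝ (H j) zs = 0) ↔
    (∀ ρ > 0, ∀ z, A zs ρ ≤ A z ρ) := by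
  obtain ⟨hGz, hHz⟩ : (∀ i, G i zs ≤ 0) ∧ ∀ j, H j zs = 0 := by simpa [hX] using hzs
  have hAL : ∀ ρ, A zs ρ = L zs := fun ρ => by simp [hA, hHz, max_eq_right (hGz _)]
  constructor
  · intro hstat ρ hρ z
    have hLz : L zs ≤ L z := by
      have hgz := hg.add_apply_sub_le_of_hasFDerivAt (hgd zs).hasFDerivAt z
      have hGsum := Finset.sum_le_sum fun i (_ : i ∈ Finset.univ) => mul_le_mul_of_nonneg_left
        ((hG i).add_apply_sub_le_of_hasFDerivAt (hGd i zs).hasFDerivAt z) (hu i)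
      have hHsum := Finset.sum_le_sum fun j (_ : j ∈ Finset.univ) => mul_le_mul_of_nonneg_left
        ((hH j).add_apply_sub_le_of_hasFDerivAt (hHd j zs).hasFDerivAt z) (hv j)
      have hzero := DFunLike.congr_fun hstat (z - zs)
      simp only [add_apply, sum_apply, smul_apply, smul_eq_mul,
        zero_apply] at hzero
      simp only [mul_add, Finset.sum_add_distrib] at hGsum hHsum
      rw [hL, hL]
      linarith
    rw [hAL, hA, add_assoc]
    exact le_add_of_le_of_nonneg hLz (by positivity)
  · intro hmin
    have hLmin : ∀ z, L zs ≤ L z := fun z => by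
      refine le_of_forall_pos_le_add_mul
        (p := ∑ i, (max (G i z) 0) ^ 2 + ∑ j, (H j z) ^ 2) (by positivity) fun ρ hρ => ?_
      have hρz := hmin ρ hρ z
      rw [hAL, hA] at hρz
      linarith
    have hderiv : HasFDerivAt L (fderiv ℝ g zs + ∑ i, u i • fderiv ℝ (G i) zs
        + ∑ j, v j • fderiv ℝ (H j) zs) zs := by
      rw [funext hL]
      exact ((hgd zs).hasFDerivAt.add (HasFDerivAt.fun_sum fun i _ =>
        (hGd i zs).hasFDerivAt.const_mul (u i))).add (HasFDerivAt.fun_sum fun j _ =>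
        (hHd j zs).hasFDerivAt.const_mul (v j))
    exact IsLocalMin.hasFDerivAt_eq_zero (Filter.Eventually.of_forall hLmin) hderiv
end

section
/- Let g, g₁,…,g_s, h₁,…,h_r : E → ℝ be continuous, and assume every level set S(π, g) = {z ∈ E : g(z) ≤ π} (π ∈ ℝ) is bounded. Let (zᵏ) be a sequence in E and (ρ_k) a sequence of positive reals with ρ_k → +∞, and suppose the sequence H_k = g(zᵏ) + ρ_k Σᵢ (max{gᵢ(zᵏ), 0})² + ρ_k Σⱼ hⱼ(zᵏ)² is bounded. Then the sequence (zᵏ) is bounded, and every cluster point z* of (zᵏ) is feasible: gᵢ(z*) ≤ 0 for all i = 1,…,s and hⱼ(z*) = 0 for all j = 1,…,r. -/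
/-- If the penalized values `g (z k) + ρ k * p (z k)` are bounded above while `ρ` tends to infinity,
then the penalty `p` is nonpositive at every cluster point of `z`. -/
theorem MapClusterPt.penalty_nonpos {ι E : Type*} [TopologicalSpace E] {l : Filter ι}
    {g p : E → ℝ} {z : ι → E} {ρ : ι → ℝ} {M : ℝ} {x : E}
    (hx : MapClusterPt x l z) (hg : ContinuousAt g x) (hp : ContinuousAt p x)
    (hρ : Filter.Tendsto ρ l Filter.atTop) (hM : ∀ k, g (z k) + ρ k * p (z k) ≤ M) :
    p x ≤ 0 := by
  by_contra! hpos
  have hnear : ∀ᶠ y in nhds x, g x - 1 < g y ∧ p x / 2 < p y :=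
    (hg.eventually (lt_mem_nhds (sub_one_lt _))).and
      (hp.eventually (lt_mem_nhds (half_lt_self hpos)))
  have hlarge : ∀ᶠ k in l, 0 ≤ ρ k ∧ (M - (g x - 1)) / (p x / 2) ≤ ρ k :=
    (hρ.eventually_ge_atTop _).and (hρ.eventually_ge_atTop _)
  obtain ⟨k, ⟨hgk, hpk⟩, hρ0, hρk⟩ := ((hx.frequently hnear).and_eventually hlarge).exists
  rw [div_le_iff₀ (half_pos hpos)] at hρk
  have := mul_le_mul_of_nonneg_left hpk.le hρ0
  linarith [hM k]

/-- Theorem 9(ii), first part: if every level set of `g` is bounded, the penalty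
parameters `ρ k → ∞`, and the penalized values
`H_k = g(zᵏ) + ρ_k Σᵢ (max{gᵢ(zᵏ),0})² + ρ_k Σⱼ hⱼ(zᵏ)²` are bounded, then the
iterate sequence `(zᵏ)` is bounded and every cluster point is feasible. -/
theorem stmt_19 {n s r : ℕ}
    (g : EuclideanSpace ℝ (Fin n) → ℝ)
    (G : Fin s → EuclideanSpace ℝ (Fin n) → ℝ)
    (H : Fin r → EuclideanSpace ℝ (Fin n) → ℝ)
    (hg : Continuous g) (hG : ∀ i, Continuous (G i)) (hH : ∀ j, Continuous (H j))
    (hlev : ∀ π : ℝ, Bornology.IsBounded {z | g z ≤ π})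
    (zk : ℕ → EuclideanSpace ℝ (Fin n))
    (ρ : ℕ → ℝ) (hρ : ∀ k, 0 < ρ k)
    (hρtop : Filter.Tendsto ρ Filter.atTop Filter.atTop)
    (Hk : ℕ → ℝ)
    (hHk : ∀ k, Hk k = g (zk k) + ρ k * ∑ i, (max (G i (zk k)) 0) ^ 2
        + ρ k * ∑ j, (H j (zk k)) ^ 2)
    (hbdd : ∃ M : ℝ, ∀ k, |Hk k| ≤ M) :
    Bornology.IsBounded (Set.range zk) ∧
    ∀ zstar : EuclideanSpace ℝ (Fin n),
      MapClusterPt zstar Filter.atTop zk →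
      (∀ i, G i zstar ≤ 0) ∧ (∀ j, H j zstar = 0) := by
  obtain ⟨M, hM⟩ := hbdd
  set p : EuclideanSpace ℝ (Fin n) → ℝ :=
    fun z => ∑ i, (max (G i z) 0) ^ 2 + ∑ j, (H j z) ^ 2 with hp
  have hG0 (z) : 0 ≤ ∑ i, (max (G i z) 0) ^ 2 := Finset.sum_nonneg fun i _ => sq_nonneg _
  have hH0 (z) : 0 ≤ ∑ j, (H j z) ^ 2 := Finset.sum_nonneg fun j _ => sq_nonneg _
  have hpM (k) : g (zk k) + ρ k * p (zk k) ≤ M := by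
    have := (le_abs_self _).trans (hM k)
    rw [hHk] at this
    simp only [hp, mul_add]
    linarith
  refine ⟨(hlev M).subset ?_, fun x hx => ?_⟩
  · rintro _ ⟨k, rfl⟩
    have := mul_nonneg (hρ k).le (add_nonneg (hG0 (zk k)) (hH0 (zk k)))
    exact (le_add_of_nonneg_right this).trans (hpM k)
  · have hpc : Continuous p := by fun_prop
    have hpx : p x ≤ 0 := hx.penalty_nonpos hg.continuousAt hpc.continuousAt hρtop hpM
    have hGx : ∑ i, (max (G i x) 0) ^ 2 = 0 := by linarith [hG0 x, hH0 x]
    have hHx : ∑ j, (H j x) ^ 2 = 0 := by linarith [hG0 x, hH0 x]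
    rw [Finset.sum_eq_zero_iff_of_nonneg fun _ _ => sq_nonneg _] at hGx hHx
    exact ⟨fun i => max_eq_right_iff.mp
        (pow_eq_zero_iff two_ne_zero |>.mp (hGx i (Finset.mem_univ i))),
      fun j => pow_eq_zero_iff two_ne_zero |>.mp (hHx j (Finset.mem_univ j))⟩
end
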